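/- Suppose the filtered velocity tracking error q_r : ℝ → (Fin n → ℝ) is differentiable and satisfies M(t) q_r′(t) = −(M(t) + C(t)) q_r(t) for all t, that P M(t) is symmetric for all t with P C(t) + C(t)ᵀ P = P M′(t) for all t, and that P M is uniformly positive definite: there is μ > 0 with xᵀ (P M(t)) x ≥ μ ‖x‖² for all t and all x. Then ‖q_r(t)‖ ≤ sqrt(2 W(0)/μ) · exp(−t) for all t ≥ 0, where W(0) = (1/2) q_r(0)ᵀ P M(0) q_r(0); i.e., the filtered velocity tracking error converges to zero exponentially with rate 1. -/

import Mathlib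

open Matrix

/-!
Suppose `M q_r' = -(r M + C) q_r`. The energy `W = ½ q_rᵀ (P M) q_r` then satisfies `W' = -2 r W`:
symmetry of `P M` merges the two terms containing `q_r'` into
`q_rᵀ P M q_r' = -r q_rᵀ P M q_r - q_rᵀ P C q_r`, and the remaining term
`½ q_rᵀ P M' q_r = ½ q_rᵀ (P C + (P C)ᵀ) q_r = q_rᵀ P C q_r` cancels the contribution of `C`.
Hence `W` is a multiple of `exp (-2 r t)`, and `μ ‖q_r‖² ≤ 2 W` turns this into the bound on
`‖q_r‖`; the tracking error is the case `r = 1`.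
-/

section MatrixDerivatives

variable {𝕜 𝔸 l m n : Type*} [NontriviallyNormedField 𝕜] [NormedRing 𝔸] [NormedAlgebra 𝕜 𝔸]
  [Fintype n] {t : 𝕜}

lemma hasDerivAt_dotProduct {u v : 𝕜 → n → 𝔸} {u' v' : n → 𝔸}
    (hu : HasDerivAt u u' t) (hv : HasDerivAt v v' t) :
    HasDerivAt (fun s => u s ⬝ᵥ v s) (u' ⬝ᵥ v t + u t ⬝ᵥ v') t := by
  simp only [dotProduct, ← Finset.sum_add_distrib]
  exact HasDerivAt.fun_sum fun i _ => (hasDerivAt_pi.1 hu i).mul (hasDerivAt_pi.1 hv i)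

lemma hasDerivAt_mulVec [Finite m] {A : 𝕜 → Matrix m n 𝔸} {A' : Matrix m n 𝔸}
    {v : 𝕜 → n → 𝔸} {v' : n → 𝔸}
    (hA : ∀ i j, HasDerivAt (fun s => A s i j) (A' i j) t) (hv : HasDerivAt v v' t) :
    HasDerivAt (fun s => A s *ᵥ v s) (A' *ᵥ v t + A t *ᵥ v') t := by
  have := Fintype.ofFinite m
  exact hasDerivAt_pi.2 fun i => hasDerivAt_dotProduct (hasDerivAt_pi.2 (hA i)) hv

lemma hasDerivAt_const_matrix_mul_apply (P : Matrix l n 𝔸) {A : 𝕜 → Matrix n m 𝔸}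
    {A' : Matrix n m 𝔸} (hA : ∀ i j, HasDerivAt (fun s => A s i j) (A' i j) t) (i : l) (j : m) :
    HasDerivAt (fun s => (P * A s) i j) ((P * A') i j) t := by
  simp only [mul_apply]
  exact HasDerivAt.fun_sum fun k _ => (hA k j).const_mul (P i k)

end MatrixDerivatives

lemma eq_exp_smul_of_hasDerivAt_smul {E : Type*} [NormedAddCommGroup E] [NormedSpace ℝ E]
    {f : ℝ → E} {c : ℝ} (hf : ∀ t, HasDerivAt f (c • f t) t) (t : ℝ) :
    f t = Real.exp (c * t) • f 0 := by
  have hderiv (s : ℝ) : HasDerivAt (fun s => Real.exp (-(c * s)) • f s) 0 s := by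
    refine (((hasDerivAt_id' s).const_mul c).fun_neg.exp.smul (hf s)).congr_deriv ?_
    module
  have hconst : Real.exp (-(c * t)) • f t = f 0 := by
    simpa using is_const_of_deriv_eq_zero (fun s => (hderiv s).differentiableAt)
      (fun s => (hderiv s).deriv) t 0
  rw [← hconst, smul_smul, ← Real.exp_add, add_neg_cancel, Real.exp_zero, one_smul]

lemma sqrt_exp_two_mul_mul (a b : ℝ) : √(Real.exp (2 * a) * b) = √b * Real.exp a := by
  rw [Real.sqrt_mul (Real.exp_pos _).le, ← Real.exp_half, mul_div_cancel_left₀ a two_ne_zero,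
    mul_comm]

lemma dotProduct_mulVec_comm_of_isSymm {n R : Type*} [Fintype n] [CommSemiring R]
    {A : Matrix n n R} (hA : A.IsSymm) (x y : n → R) : x ⬝ᵥ (A *ᵥ y) = y ⬝ᵥ (A *ᵥ x) := by
  rw [← dotProduct_transpose_mulVec, hA.eq]

section Energy

variable {ι : Type*} [Fintype ι]

/-- The energy `W(t) = ½ q(t)ᵀ A(t) q(t)` of a trajectory `q` with respect to a time-dependent
matrix `A`; the Lyapunov function of the tracking error is obtained for `A = P M`. -/
noncomputable def energy (A : ℝ → Matrix ι ι ℝ) (q : ℝ → ι → ℝ) (t : ℝ) : ℝ :=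
  1 / 2 * (q t ⬝ᵥ (A t *ᵥ q t))

variable {A : ℝ → Matrix ι ι ℝ} {q : ℝ → ι → ℝ} {t : ℝ}

lemma hasDerivAt_energy {A' : Matrix ι ι ℝ} {q' : ι → ℝ}
    (hA : ∀ i j, HasDerivAt (fun s => A s i j) (A' i j) t) (hsymm : (A t).IsSymm)
    (hq : HasDerivAt q q' t) :
    HasDerivAt (energy A q) (q t ⬝ᵥ (A t *ᵥ q') + 1 / 2 * (q t ⬝ᵥ (A' *ᵥ q t))) t := by
  refine ((hasDerivAt_dotProduct hq (hasDerivAt_mulVec hA hq)).const_mul (1 / 2)).congr_deriv ?_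
  rw [dotProduct_mulVec_comm_of_isSymm hsymm q' (q t), dotProduct_add]
  ring

lemma hasDerivAt_energy_of_closedLoop {B : Matrix ι ι ℝ} {q' : ι → ℝ} {r : ℝ}
    (hA : ∀ i j, HasDerivAt (fun s => A s i j) ((B + Bᵀ) i j) t) (hsymm : (A t).IsSymm)
    (hq : HasDerivAt q q' t) (hclosed : A t *ᵥ q' = -((r • A t + B) *ᵥ q t)) :
    HasDerivAt (energy A q) (-(2 * r) * energy A q t) t := by
  refine (hasDerivAt_energy hA hsymm hq).congr_deriv ?_
  rw [hclosed, energy]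
  simp only [add_mulVec, smul_mulVec, dotProduct_neg, dotProduct_add, dotProduct_smul,
    dotProduct_transpose_mulVec, smul_eq_mul]
  ring

lemma sqrt_dotProduct_self_le_sqrt_energy {μ : ℝ} (hμ : 0 < μ)
    (hcoercive : μ * (q t ⬝ᵥ q t) ≤ q t ⬝ᵥ (A t *ᵥ q t)) :
    √(q t ⬝ᵥ q t) ≤ √(2 * energy A q t / μ) := by
  refine Real.sqrt_le_sqrt ((le_div_iff₀' hμ).2 ?_)
  rw [energy]
  linarith

theorem statement5_general {M M' C : ℝ → Matrix ι ι ℝ} {P : Matrix ι ι ℝ}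
    {qr qr' : ℝ → ι → ℝ} {r μ : ℝ}
    (hMderiv : ∀ t i j, HasDerivAt (fun s => M s i j) (M' t i j) t)
    (hPsymm : P.IsSymm) (hqr : ∀ t, HasDerivAt qr (qr' t) t)
    (hclosed : ∀ t, M t *ᵥ qr' t = -((r • M t + C t) *ᵥ qr t))
    (hPM : ∀ t, (P * M t).IsSymm)
    (hPC : ∀ t, P * C t + (C t)ᵀ * P = P * M' t)
    (hμ : 0 < μ) (hunif : ∀ t x, μ * (x ⬝ᵥ x) ≤ x ⬝ᵥ ((P * M t) *ᵥ x)) (t : ℝ) :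
    √(qr t ⬝ᵥ qr t)
      ≤ √(2 * (1 / 2 * (qr 0 ⬝ᵥ ((P * M 0) *ᵥ qr 0))) / μ) * Real.exp (-r * t) := by
  set W := energy (fun s => P * M s) qr
  have hPM' (s : ℝ) : P * C s + (P * C s)ᵀ = P * M' s := by
    rw [transpose_mul, hPsymm.eq, hPC]
  have hPclosed (s : ℝ) : (P * M s) *ᵥ qr' s = -((r • (P * M s) + P * C s) *ᵥ qr s) := by
    rw [← mulVec_mulVec, hclosed, mulVec_neg, mulVec_mulVec, mul_add, Matrix.mul_smul]
  have hW (s : ℝ) : HasDerivAt W (-(2 * r) * W s) s :=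
    hasDerivAt_energy_of_closedLoop
      (by simpa only [hPM'] using hasDerivAt_const_matrix_mul_apply P (hMderiv s))
      (hPM s) (hqr s) (hPclosed s)
  calc √(qr t ⬝ᵥ qr t) ≤ √(2 * W t / μ) :=
        sqrt_dotProduct_self_le_sqrt_energy hμ (hunif t (qr t))
    _ = √(Real.exp (2 * (-r * t)) * (2 * W 0 / μ)) := by
        rw [eq_exp_smul_of_hasDerivAt_smul hW t, smul_eq_mul]
        ring_nf
    _ = √(2 * W 0 / μ) * Real.exp (-r * t) := sqrt_exp_two_mul_mul _ _

end Energy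

/-- Under the closed-loop equation `M q_r′ = −(M + C) q_r`, with
`P M(t)` symmetric, `P C(t) + C(t)ᵀ P = P M′(t)`, and `P M` uniformly positive
definite (`xᵀ (P M(t)) x ≥ μ ‖x‖²` with `μ > 0`), the Euclidean norm of the
filtered velocity tracking error satisfies
`‖q_r(t)‖ ≤ sqrt(2 W(0)/μ) · exp(−t)` for `t ≥ 0`, where
`W(0) = (1/2) q_r(0)ᵀ P M(0) q_r(0)`.
(Here `‖x‖ = Real.sqrt (x ⬝ᵥ x)` is the Euclidean norm.) -/
theorem statement5 (n : ℕ) (hn : 1 ≤ n)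
    (M M' C : ℝ → Matrix (Fin n) (Fin n) ℝ)
    (hMderiv : ∀ t : ℝ, ∀ i j : Fin n, HasDerivAt (fun s => M s i j) (M' t i j) t)
    (hMsymm : ∀ t : ℝ, (M t).IsSymm)
    (hMpd : ∀ t : ℝ, (M t).PosDef)
    (hCcont : ∀ i j : Fin n, Continuous fun t => C t i j)
    (P : Matrix (Fin n) (Fin n) ℝ) (hPsymm : P.IsSymm) (hPpd : P.PosDef)
    (qr qr' : ℝ → Fin n → ℝ)
    (hqr : ∀ t : ℝ, HasDerivAt qr (qr' t) t)
    (hclosed : ∀ t : ℝ, M t *ᵥ qr' t = -((M t + C t) *ᵥ qr t))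
    (hPM : ∀ t : ℝ, (P * M t).IsSymm)
    (hPC : ∀ t : ℝ, P * C t + (C t)ᵀ * P = P * M' t)
    (μ : ℝ) (hμ : 0 < μ)
    (hunif : ∀ t : ℝ, ∀ x : Fin n → ℝ, μ * (x ⬝ᵥ x) ≤ x ⬝ᵥ ((P * M t) *ᵥ x)) :
    ∀ t : ℝ, 0 ≤ t →
      Real.sqrt (qr t ⬝ᵥ qr t)
        ≤ Real.sqrt (2 * ((1/2 : ℝ) * (qr 0 ⬝ᵥ ((P * M 0) *ᵥ qr 0))) / μ)
            * Real.exp (-t) := by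
  intro t _
  simpa only [neg_one_mul, one_smul] using
    statement5_general (r := 1) hMderiv hPsymm hqr (by simpa only [one_smul]) hPM hPC hμ hunif t
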